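/- Under the hypotheses below, the sets T₀, T₁, T₂, T₃, T₄ form a partition of G × U into nonempty inverse-closed subsets, and for all i, j ∈ {0,1,2,3,4} there exist nonnegative integers c⁰, c¹, c², c³, c⁴ such that in the integral group ring ℤ[G × U] one has T̲ᵢ · T̲ⱼ = c⁰·T̲₀ + c¹·T̲₁ + c²·T̲₂ + c³·T̲₃ + c⁴·T̲₄, where for a subset A of G × U, A̲ denotes the sum of the elements of A. In other words, the ℤ-span of {T̲₀, T̲₁, T̲₂, T̲₃, T̲₄} is a commutative subring of ℤ[G × U] (a symmetric S-ring of rank 5 over G × U). -/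

import Mathlib

open scoped Pointwise

/-- The sum of the elements of a finite subset `A` of a group `G`
in the integral group ring `ℤ[G]`. -/
noncomputable def grpSum (G : Type*) [Group G] (A : Finset G) : MonoidAlgebra ℤ G :=
  ∑ a ∈ A, MonoidAlgebra.of ℤ G a

set_option linter.unusedSectionVars false
section helpers
variable {G U : Type*} [Group G] [Fintype G] [DecidableEq G]

noncomputable def cf (g : G) : MonoidAlgebra ℤ G →+ ℤ where
  toFun z := z.coeff g
  map_zero' := by simp
  map_add' := by simp

lemma cf_of (g a : G) : cf g (MonoidAlgebra.of ℤ G a) = if a = g then 1 else 0 := by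
  change (MonoidAlgebra.of ℤ G a).coeff g = _
  simp [Finsupp.single_apply]

lemma cf_grpSum (g : G) (A : Finset G) : cf g (grpSum G A) = if g ∈ A then 1 else 0 := by
  simp only [grpSum, map_sum, cf_of]
  simp

lemma cf_mul_nonneg (g : G) (A B : Finset G) : 0 ≤ cf g (grpSum G A * grpSum G B) := by
  simp only [grpSum, Finset.sum_mul_sum, ← map_mul, map_sum]
  refine Finset.sum_nonneg fun a _ => Finset.sum_nonneg fun b _ => ?_
  rw [cf_of]; split_ifs <;> simp

lemma grpSum_union (A B : Finset G) (h : Disjoint A B) :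
    grpSum G (A ∪ B) = grpSum G A + grpSum G B := Finset.sum_union h

lemma grpSum_sdiff (A : Finset G) :
    grpSum G (Finset.univ \ A) = grpSum G Finset.univ - grpSum G A := by
  have := Finset.sum_sdiff (Finset.subset_univ A) (f := fun a => MonoidAlgebra.of ℤ G a)
  unfold grpSum
  rw [← this]; simp

lemma univ_mul_grpSum (A : Finset G) :
    grpSum G Finset.univ * grpSum G A = (A.card : ℤ) • grpSum G Finset.univ := by
  unfold grpSum
  rw [Finset.sum_mul_sum, Finset.sum_comm]
  simp only [← map_mul]
  have h : ∀ a ∈ A, ∑ x : G, MonoidAlgebra.of ℤ G (x * a) = ∑ x : G, MonoidAlgebra.of ℤ G x :=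
    fun a _ => Equiv.sum_comp (Equiv.mulRight a) (fun x => MonoidAlgebra.of ℤ G x)
  rw [Finset.sum_congr rfl h]
  simp

lemma grpSum_mul_univ (A : Finset G) :
    grpSum G A * grpSum G Finset.univ = (A.card : ℤ) • grpSum G Finset.univ := by
  unfold grpSum
  rw [Finset.sum_mul_sum]
  simp only [← map_mul]
  have h : ∀ a ∈ A, ∑ x : G, MonoidAlgebra.of ℤ G (a * x) = ∑ x : G, MonoidAlgebra.of ℤ G x :=
    fun a _ => Equiv.sum_comp (Equiv.mulLeft a) (fun x => MonoidAlgebra.of ℤ G x)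
  rw [Finset.sum_congr rfl h]
  simp

lemma mul_grpSum_filter (N : Subgroup G) [DecidablePred (· ∈ N)] (A : Finset G) (c : ℕ)
    (h : ∀ g : G, (A.filter (fun x => g⁻¹ * x ∈ N)).card = c) :
    grpSum G A * grpSum G (Finset.univ.filter (· ∈ N)) = (c : ℤ) • grpSum G Finset.univ := by
  unfold grpSum
  rw [Finset.sum_mul_sum]
  have : ∀ a ∈ A, ∑ j ∈ Finset.univ.filter (· ∈ N), MonoidAlgebra.of ℤ G a * MonoidAlgebra.of ℤ G j
      = ∑ g : G, if g⁻¹ * a ∈ N then MonoidAlgebra.of ℤ G g else 0 := by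
    intro a _
    rw [← Equiv.sum_comp (Equiv.mulLeft a) (fun g => if g⁻¹ * a ∈ N then MonoidAlgebra.of ℤ G g else 0), Finset.sum_filter]
    refine Finset.sum_congr rfl fun x _ => ?_
    simp [mul_assoc]
  rw [Finset.sum_congr rfl this, Finset.sum_comm, Finset.smul_sum]
  refine Finset.sum_congr rfl fun g _ => ?_
  rw [← Finset.sum_filter, Finset.sum_const, h]; simp

lemma filter_mul_grpSum (N : Subgroup G) [DecidablePred (· ∈ N)] (A : Finset G) (c : ℕ)
    (h : ∀ g : G, (A⁻¹.filter (fun x => g⁻¹ * x ∈ N)).card = c) :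
    grpSum G (Finset.univ.filter (· ∈ N)) * grpSum G A = (c : ℤ) • grpSum G Finset.univ := by
  unfold grpSum
  rw [Finset.sum_mul_sum, Finset.sum_comm]
  have : ∀ a ∈ A, ∑ j ∈ Finset.univ.filter (· ∈ N), MonoidAlgebra.of ℤ G j * MonoidAlgebra.of ℤ G a
      = ∑ g : G, if g * a⁻¹ ∈ N then MonoidAlgebra.of ℤ G g else 0 := by
    intro a _
    rw [← Equiv.sum_comp (Equiv.mulRight a) (fun g => if g * a⁻¹ ∈ N then MonoidAlgebra.of ℤ G g else 0), Finset.sum_filter]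
    refine Finset.sum_congr rfl fun x _ => ?_
    simp [mul_assoc]
  rw [Finset.sum_congr rfl this, Finset.sum_comm, Finset.smul_sum]
  refine Finset.sum_congr rfl fun g _ => ?_
  rw [← Finset.sum_filter, Finset.sum_const]
  have h2 := h g⁻¹
  rw [← h2]
  have : (A⁻¹.filter (fun x => g⁻¹⁻¹ * x ∈ N)) = (A.filter (fun x => g * x⁻¹ ∈ N))⁻¹ := by
    ext x; simp
  rw [this, Finset.card_inv]; simp

lemma N_mul_N (N : Subgroup G) [DecidablePred (· ∈ N)] :
    grpSum G (Finset.univ.filter (· ∈ N)) * grpSum G (Finset.univ.filter (· ∈ N)) =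
    (Nat.card N : ℤ) • grpSum G (Finset.univ.filter (· ∈ N)) := by
  have hc : (Finset.univ.filter (· ∈ N)).card = Nat.card N := by
    rw [Nat.card_eq_fintype_card, Fintype.card_subtype]
  unfold grpSum
  rw [Finset.sum_mul_sum]
  have : ∀ a ∈ Finset.univ.filter (· ∈ N), ∑ j ∈ Finset.univ.filter (· ∈ N), MonoidAlgebra.of ℤ G a * MonoidAlgebra.of ℤ G j
      = ∑ j ∈ Finset.univ.filter (· ∈ N), MonoidAlgebra.of ℤ G j := by
    intro a ha
    simp only [Finset.mem_filter, Finset.mem_univ, true_and] at ha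
    rw [Finset.sum_filter, Finset.sum_filter, ← Equiv.sum_comp (Equiv.mulLeft a) (fun g => if g ∈ N then MonoidAlgebra.of ℤ G g else 0)]
    refine Finset.sum_congr rfl fun x _ => ?_
    simp [N.mul_mem_cancel_left ha]
  rw [Finset.sum_congr rfl this, Finset.sum_const, hc]; simp

/-- embedding -/
noncomputable def emb (G U : Type*) [Group G] [Group U] : MonoidAlgebra ℤ G →+* MonoidAlgebra ℤ (G × U) :=
  MonoidAlgebra.mapDomainRingHom ℤ (MonoidHom.inl G U)

lemma emb_of [Group U] (g : G) : emb G U (MonoidAlgebra.of ℤ G g) = MonoidAlgebra.of ℤ (G × U) (g, 1) := by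
  simp [emb]

noncomputable def tt (G : Type*) {U : Type*} [Group G] [Group U] (u : U) : MonoidAlgebra ℤ (G × U) :=
  MonoidAlgebra.of ℤ (G × U) (1, u)

lemma emb_grpSum_mul [Group U] (A : Finset G) (u : U) :
    emb G U (grpSum G A) * tt G u = ∑ a ∈ A, MonoidAlgebra.of ℤ (G × U) (a, u) := by
  unfold grpSum tt
  rw [map_sum, Finset.sum_mul]
  refine Finset.sum_congr rfl fun a _ => ?_
  rw [emb_of, ← map_mul]; simp

lemma emb_comm [Group U] (z : MonoidAlgebra ℤ G) (u : U) :
    tt G u * emb G U z = emb G U z * tt G u := by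
  induction z using MonoidAlgebra.induction_on with
  | of g => rw [emb_of]; unfold tt; rw [← map_mul, ← map_mul]; simp
  | add a b ha hb => rw [map_add, mul_add, add_mul, ha, hb]
  | smul r a ha => rw [map_zsmul, mul_smul_comm, smul_mul_assoc, ha]

lemma tt_mul [Group U] (u v : U) : tt G u * tt G v = tt G (u * v) := by
  unfold tt; rw [← map_mul]; simp

lemma tt_one [Group U] : tt G (1 : U) = 1 := by
  unfold tt; exact map_one _

lemma card_of_trans (N : Subgroup G) [DecidablePred (· ∈ N)] (n l : ℕ) (hn : 2 ≤ n)
    (hN : Nat.card N = n) (hG : Fintype.card G = n ^ 2 * l) (A : Finset G)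
    (h : ∀ g : G, (A.filter (fun x => g⁻¹ * x ∈ N)).card = 1) : A.card = n * l := by
  have h1 := mul_grpSum_filter N A 1 h
  have h2 := congrArg (fun z => cf 1 (grpSum G Finset.univ * z)) h1
  simp only [← mul_assoc, univ_mul_grpSum, smul_mul_assoc, mul_smul_comm, map_zsmul,
    cf_grpSum] at h2
  have hc : (Finset.univ.filter (· ∈ N)).card = n := by
    rw [← hN, Nat.card_eq_fintype_card, Fintype.card_subtype]
  simp only [hc, Finset.card_univ, hG] at h2
  simp at h2
  have h3 : A.card * n = n ^ 2 * l := by exact_mod_cast h2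
  have : A.card * n = (n * l) * n := by rw [h3]; ring
  exact Nat.eq_of_mul_eq_mul_right (by omega) this

/-- The core computation: the square of `S`. -/
lemma S_sq {R : Type*} [Ring R] {U : Type*} [Group U] [Fintype U] [DecidableEq U]
    (w : ℕ) (hU : Fintype.card U = w + 1)
    (f y : U → R) (Z : R) (h1 : ∀ u, u ≠ 1 → f u * f u⁻¹ = Z)
    (h2 : ∀ u v, u ≠ 1 → v ≠ 1 → u * v ≠ 1 → f u * f v = y (u * v)) :
    (∑ u ∈ Finset.univ.erase (1 : U), f u) * (∑ u ∈ Finset.univ.erase (1 : U), f u) =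
      (w : ℤ) • Z + ((w : ℤ) - 1) • ∑ u ∈ Finset.univ.erase (1 : U), y u := by
  have key : ∀ u ∈ Finset.univ.erase (1 : U), ∑ v ∈ Finset.univ.erase (1 : U), f u * f v =
      Z + (∑ v ∈ Finset.univ.erase (1 : U), y v - y u) := by
    intro u hu
    have hu1 : u ≠ 1 := Finset.ne_of_mem_erase hu
    rw [← Finset.add_sum_erase (Finset.univ.erase (1 : U)) (fun v => f u * f v)
      (a := u⁻¹) (by simp [hu1]), h1 u hu1, ← Finset.add_sum_erase (Finset.univ.erase (1 : U)) y hu,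
      add_sub_cancel_left]
    congr 1
    refine Finset.sum_nbij' (fun v => u * v) (fun v => u⁻¹ * v) ?_ ?_ ?_ ?_ ?_
    · intro v hv
      simp only [Finset.mem_erase, Finset.mem_univ, and_true] at hv ⊢
      exact ⟨by simpa using hv.2, fun h => hv.1 (eq_inv_of_mul_eq_one_right h)⟩
    · intro v hv
      simp only [Finset.mem_erase, Finset.mem_univ, and_true] at hv ⊢
      exact ⟨by simpa using hv.2, fun h => hv.1 (inv_mul_eq_one.mp h).symm⟩
    · intro v _; simp
    · intro v _; simp
    · intro v hv
      simp only [Finset.mem_erase, Finset.mem_univ, and_true] at hv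
      exact h2 u v hu1 hv.2 (fun h => hv.1 (eq_inv_of_mul_eq_one_right h))
  rw [Finset.sum_mul_sum, Finset.sum_congr rfl key, Finset.sum_add_distrib, Finset.sum_sub_distrib,
    Finset.sum_const, Finset.sum_const, Finset.card_erase_of_mem (Finset.mem_univ _),
    Finset.card_univ, hU, Nat.add_sub_cancel, sub_smul, one_smul, natCast_zsmul, natCast_zsmul]

lemma t_sq {R : Type*} [Ring R] {U : Type*} [Group U] [Fintype U] [DecidableEq U]
    (w : ℕ) (hU : Fintype.card U = w + 1)
    (t : U → R) (h1 : t 1 = 1) (h2 : ∀ u v, t u * t v = t (u * v)) :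
    (∑ u ∈ Finset.univ.erase (1 : U), t u) * (∑ u ∈ Finset.univ.erase (1 : U), t u) =
      (w : ℤ) • 1 + ((w : ℤ) - 1) • ∑ u ∈ Finset.univ.erase (1 : U), t u :=
  S_sq w hU t t 1 (fun u _ => by rw [h2]; simp [h1]) (fun u v _ _ _ => h2 u v)

/-- Abstract multiplication table. -/
lemma table {R : Type*} [Ring R] (n m w p q : ℤ) (k r : ℤ) (N G S t : R)
    (hNN : N * N = n • N) (hNG : N * G = n • G) (hGN : G * N = n • G) (hGG : G * G = m • G)
    (hGS : G * S = k • (G * t)) (hSG : S * G = k • (G * t)) (hNS : N * S = G * t)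
    (hSN : S * N = G * t) (htN : t * N = N * t) (htG : t * G = G * t)
    (htt : t * t = w • 1 + (w - 1) • t)
    (hSS : S * S = w • (k • 1 + r • (G - N)) + (w - 1) • (p • S + q • (G * t - S))) :
    ∀ T : Fin 5 → R, T = ![1, N - 1, G - N, S, G * t - S] →
    ∀ i j, T i * T j ∈ Submodule.span ℤ (Set.range T) ∧ T i * T j = T j * T i := by
  have hNJ : N * (G * t) = n • (G * t) := by rw [← mul_assoc, hNG, smul_mul_assoc]
  have hJN : (G * t) * N = n • (G * t) := by
    rw [mul_assoc, htN, ← mul_assoc, hGN, smul_mul_assoc]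
  have hGJ : G * (G * t) = m • (G * t) := by rw [← mul_assoc, hGG, smul_mul_assoc]
  have hJG : (G * t) * G = m • (G * t) := by
    rw [mul_assoc, htG, ← mul_assoc, hGG, smul_mul_assoc]
  have hJt : (G * t) * t = w • G + (w - 1) • (G * t) := by
    rw [mul_assoc, htt, mul_add, mul_smul_comm, mul_smul_comm, mul_one]
  have hSJ : S * (G * t) = k • (w • G + (w - 1) • (G * t)) := by
    rw [← mul_assoc, hSG, smul_mul_assoc, hJt]
  have hJS : (G * t) * S = k • (w • G + (w - 1) • (G * t)) := by
    rw [← htG, mul_assoc, hGS, mul_smul_comm, ← mul_assoc, htG, hJt]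
  have hJJ : (G * t) * (G * t) = m • (w • G + (w - 1) • (G * t)) := by
    rw [← mul_assoc, hJG, smul_mul_assoc, hJt]
  generalize G * t = J at *
  intro T hT
  have m0 : (1 : R) ∈ Submodule.span ℤ (Set.range T) := 
    Submodule.subset_span ⟨0, by rw [hT]; rfl⟩
  have mN : N ∈ Submodule.span ℤ (Set.range T) := by
    have : N - 1 ∈ Submodule.span ℤ (Set.range T) := Submodule.subset_span ⟨1, by rw [hT]; rfl⟩
    simpa using add_mem this m0
  have mG : G ∈ Submodule.span ℤ (Set.range T) := by
    have : G - N ∈ Submodule.span ℤ (Set.range T) := Submodule.subset_span ⟨2, by rw [hT]; rfl⟩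
    simpa using add_mem this mN
  have mS : S ∈ Submodule.span ℤ (Set.range T) := Submodule.subset_span ⟨3, by rw [hT]; rfl⟩
  have mJ : J ∈ Submodule.span ℤ (Set.range T) := by
    have : J - S ∈ Submodule.span ℤ (Set.range T) := Submodule.subset_span ⟨4, by rw [hT]; rfl⟩
    simpa using add_mem this mS
  generalize Submodule.span ℤ (Set.range T) = P at *
  subst hT
  have hb : ∀ i j, (![1, N, G, S, J] : Fin 5 → R) i * (![1, N, G, S, J] : Fin 5 → R) j ∈ P ∧
     (![1, N, G, S, J] : Fin 5 → R) i * (![1, N, G, S, J] : Fin 5 → R) j =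
     (![1, N, G, S, J] : Fin 5 → R) j * (![1, N, G, S, J] : Fin 5 → R) i := by
    have s := fun (c : ℤ) (x : R) (h : x ∈ P) => P.smul_mem c h
    have e1 := P.add_mem (s w _ mG) (s (w - 1) _ mJ)
    have e2 : S * S ∈ P := by
      rw [hSS]
      exact P.add_mem (s _ _ (P.add_mem (s _ _ m0) (s _ _ (P.sub_mem mG mN))))
        (s _ _ (P.add_mem (s _ _ mS) (s _ _ (P.sub_mem mJ mS))))
    intro i j
    fin_cases i <;> fin_cases j <;>
      simp only [Fin.mk_zero, Fin.mk_one, Fin.reduceFinMk, Fin.isValue, Matrix.cons_val, mul_one, one_mul, hNN, hNG, hGN, hGG,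
        hGS, hSG, hNS, hSN, hNJ, hJN, hGJ, hJG, hSJ, hJS, hJJ, and_true] <;>
      first | assumption | exact s _ _ (by assumption)
  have a00 := hb 0 0
  have hb' : ∀ i j, (![1, N, G, S, J] : Fin 5 → R) i * (![1, N, G, S, J] : Fin 5 → R) j ∈ P :=
    fun i j => (hb i j).1
  have hT : ∀ i, ∃ c : Fin 5 → ℤ, (![1, N - 1, G - N, S, J - S] : Fin 5 → R) i =
      ∑ k, c k • (![1, N, G, S, J] : Fin 5 → R) k := by
    intro i
    fin_cases i
    · exact ⟨![1, 0, 0, 0, 0], by simp [Fin.sum_univ_five]⟩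
    · exact ⟨![-1, 1, 0, 0, 0], by simp [Fin.sum_univ_five]; abel⟩
    · exact ⟨![0, -1, 1, 0, 0], by simp [Fin.sum_univ_five]; abel⟩
    · exact ⟨![0, 0, 0, 1, 0], by simp [Fin.sum_univ_five]⟩
    · exact ⟨![0, 0, 0, -1, 1], by simp [Fin.sum_univ_five]; abel⟩
  intro i j
  obtain ⟨c, hc⟩ := hT i
  obtain ⟨d, hd⟩ := hT j
  rw [hc, hd, Finset.sum_mul_sum, Finset.sum_mul_sum]
  constructor
  · refine sum_mem fun a _ => sum_mem fun b _ => ?_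
    rw [smul_mul_smul_comm]
    exact P.smul_mem _ (hb a b).1
  · rw [Finset.sum_comm]
    refine Finset.sum_congr rfl fun a _ => Finset.sum_congr rfl fun b _ => ?_
    rw [smul_mul_smul_comm, smul_mul_smul_comm, (hb b a).2, mul_comm (c b)]

/-- Nonnegativity of the structure constants is automatic. -/
lemma nonneg_coeffs (T : Fin 5 → Finset G) (hne : ∀ i, (T i).Nonempty)
    (hd : ∀ i j, i ≠ j → Disjoint (T i) (T j)) (A B : Finset G)
    (h : grpSum G A * grpSum G B ∈ Submodule.span ℤ (Set.range fun i => grpSum G (T i))) :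
    ∃ c : Fin 5 → ℕ, grpSum G A * grpSum G B =
          (c 0 : ℤ) • grpSum G (T 0) + (c 1 : ℤ) • grpSum G (T 1) +
            (c 2 : ℤ) • grpSum G (T 2) + (c 3 : ℤ) • grpSum G (T 3) +
            (c 4 : ℤ) • grpSum G (T 4) := by
  obtain ⟨c, hc⟩ := (Submodule.mem_span_range_iff_exists_fun ℤ).1 h
  have hc0 : ∀ k, 0 ≤ c k := by
    intro k
    obtain ⟨g, hg⟩ := hne k
    have h1 := cf_mul_nonneg g A B
    rw [← hc, map_sum, Finset.sum_eq_single k] at h1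
    · rw [map_zsmul, cf_grpSum, if_pos hg] at h1
      simpa using h1
    · intro b _ hb
      rw [map_zsmul, cf_grpSum, if_neg (Finset.disjoint_left.1 (hd k b hb.symm) hg)]
      simp
    · simp
  refine ⟨fun k => (c k).toNat, ?_⟩
  simp only [Int.toNat_of_nonneg (hc0 _)]
  rw [← hc, Fin.sum_univ_five]

end helpers

theorem linked_system_gives_S_ring
    {G U : Type*} [Group G] [Fintype G] [DecidableEq G]
    [Group U] [Fintype U] [DecidableEq U]
    (N : Subgroup G) [DecidablePred (· ∈ N)]
    (n l w μ ν : ℕ) (hn : 2 ≤ n) (hN : Nat.card N = n) (hl : 1 ≤ l)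
    (hG : Fintype.card G = n ^ 2 * l) (hU : Fintype.card U = w + 1) (hw : 2 ≤ w)
    (X : U → Finset G)
    (hXinv : ∀ u : U, u ≠ 1 → (X u)⁻¹ = X u⁻¹)
    (hXtrans : ∀ u : U, u ≠ 1 → ∀ g : G, ((X u).filter (fun x => g⁻¹ * x ∈ N)).card = 1)
    (hXX : ∀ u : U, u ≠ 1 →
      grpSum G (X u) * grpSum G (X u⁻¹) =
        ((n * l : ℕ) : ℤ) • (1 : MonoidAlgebra ℤ G) +
          (l : ℤ) • grpSum G (Finset.univ.filter (· ∉ N)))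
    (hXY : ∀ u v : U, u ≠ 1 → v ≠ 1 → u * v ≠ 1 →
      grpSum G (X u) * grpSum G (X v) =
        (μ : ℤ) • grpSum G (X (u * v)) + (ν : ℤ) • grpSum G (Finset.univ \ X (u * v)))
    (T₀ T₁ T₂ T₃ T₄ : Finset (G × U))
    (hT₀ : T₀ = {(1, 1)})
    (hT₁ : T₁ = ((Finset.univ.filter (· ∈ N)).erase 1) ×ˢ {(1 : U)})
    (hT₂ : T₂ = (Finset.univ.filter (· ∉ N)) ×ˢ {(1 : U)})
    (hT₃ : T₃ = Finset.univ.filter (fun p : G × U => p.2 ≠ 1 ∧ p.1 ∈ X p.2))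
    (hT₄ : T₄ = Finset.univ.filter (fun p : G × U => p.2 ≠ 1 ∧ p.1 ∉ X p.2)) :
    ∀ T : Fin 5 → Finset (G × U), T = ![T₀, T₁, T₂, T₃, T₄] →
      (∀ i, (T i).Nonempty) ∧
      (∀ i j, i ≠ j → Disjoint (T i) (T j)) ∧
      (T 0 ∪ T 1 ∪ T 2 ∪ T 3 ∪ T 4 = Finset.univ) ∧
      (∀ i, (T i)⁻¹ = T i) ∧
      (∀ i j, ∃ c : Fin 5 → ℕ,
        grpSum (G × U) (T i) * grpSum (G × U) (T j) =
          (c 0 : ℤ) • grpSum (G × U) (T 0) + (c 1 : ℤ) • grpSum (G × U) (T 1) +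
            (c 2 : ℤ) • grpSum (G × U) (T 2) + (c 3 : ℤ) • grpSum (G × U) (T 3) +
            (c 4 : ℤ) • grpSum (G × U) (T 4)) ∧
      (∀ i j, grpSum (G × U) (T i) * grpSum (G × U) (T j) =
        grpSum (G × U) (T j) * grpSum (G × U) (T i)) := by
  intro T hT
  have hNc : (Finset.univ.filter (· ∈ N)).card = n := by
    rw [← hN, Nat.card_eq_fintype_card, Fintype.card_subtype]
  have hXc : ∀ u, u ≠ 1 → (X u).card = n * l := fun u hu =>
    card_of_trans N n l hn hN hG (X u) (hXtrans u hu)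
  obtain ⟨u₀, hu₀⟩ : ∃ u : U, u ≠ 1 := by
    have : Nontrivial U := Fintype.one_lt_card_iff_nontrivial.1 (by omega)
    exact exists_ne 1
  have hnl : n * l < n ^ 2 * l := by
    have : 0 < n * l := Nat.mul_pos (by omega) (by omega)
    nlinarith
  have hne : ∀ i, (T i).Nonempty := by
    intro i
    subst hT
    fin_cases i
    · exact ⟨(1, 1), by simp [hT₀]⟩
    · obtain ⟨x, hx, hx1⟩ := Finset.exists_mem_ne
        (s := Finset.univ.filter (· ∈ N)) (by omega) 1
      exact ⟨(x, 1), by simpa [hT₁, hx1] using hx⟩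
    · obtain ⟨x, hx⟩ : ∃ x, x ∉ N := by
        by_contra! hcon
        have : (Finset.univ.filter (· ∈ N)) = (Finset.univ : Finset G) := by
          ext x; simp [hcon x]
        rw [this, Finset.card_univ, hG] at hNc
        nlinarith
      exact ⟨(x, 1), by simpa [hT₂] using hx⟩
    · have : (X u₀).Nonempty := by
        rw [← Finset.card_pos, hXc u₀ hu₀]; exact Nat.mul_pos (by omega) (by omega)
      obtain ⟨x, hx⟩ := this
      exact ⟨(x, u₀), by simp [hT₃, hu₀, hx]⟩
    · obtain ⟨x, hx⟩ : ∃ x, x ∉ X u₀ := by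
        by_contra! hcon
        have : X u₀ = (Finset.univ : Finset G) := by
          ext x; simp [hcon x]
        have h2 := hXc u₀ hu₀
        rw [this, Finset.card_univ, hG] at h2
        omega
      exact ⟨(x, u₀), by simp [hT₄, hu₀, hx]⟩
  have hdis : ∀ i j, i ≠ j → Disjoint (T i) (T j) := by
    intro i j hij
    rw [Finset.disjoint_left]
    rintro ⟨g, u⟩
    subst hT hT₀ hT₁ hT₂ hT₃ hT₄
    have h1 := N.one_mem
    fin_cases i <;> fin_cases j <;> first | exact absurd rfl hij | (simp; grind)
  have hcov : T 0 ∪ T 1 ∪ T 2 ∪ T 3 ∪ T 4 = Finset.univ := by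
    subst hT hT₀ hT₁ hT₂ hT₃ hT₄
    ext ⟨g, u⟩
    simp
    grind
  have hXmem : ∀ u, u ≠ 1 → ∀ g, g⁻¹ ∈ X u⁻¹ ↔ g ∈ X u := by
    intro u hu g
    rw [← hXinv u hu]; simp
  have hinv : ∀ i, (T i)⁻¹ = T i := by
    intro i
    subst hT hT₀ hT₁ hT₂ hT₃ hT₄
    ext ⟨g, u⟩
    rw [Finset.mem_inv']
    fin_cases i
    · simp
    · simp; grind
    · simp; grind
    · simp
      intro hu
      exact hXmem u hu g
    · simp
      intro hu
      rw [hXmem u hu g]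
  -- the group ring computation
  have hE1 : (1 : MonoidAlgebra ℤ (G × U)) = grpSum (G × U) (T 0) := by
    rw [hT, hT₀]; simp [grpSum]; rfl
  set NN := emb G U (grpSum G (Finset.univ.filter (· ∈ N))) with hNNdef
  set GG := emb G U (grpSum G Finset.univ) with hGGdef
  set t : MonoidAlgebra ℤ (G × U) := ∑ u ∈ Finset.univ.erase (1 : U), tt G u with ht
  set S : MonoidAlgebra ℤ (G × U) :=
    ∑ u ∈ Finset.univ.erase (1 : U), emb G U (grpSum G (X u)) * tt G u with hS
  have hfil : grpSum G (Finset.univ.filter (· ∉ N)) =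
      grpSum G Finset.univ - grpSum G (Finset.univ.filter (· ∈ N)) := by
    rw [← grpSum_sdiff]; congr 1; ext x; simp
  have inl : ∀ A : Finset G, grpSum (G × U) (A ×ˢ {(1 : U)}) = emb G U (grpSum G A) := by
    intro A
    have := emb_grpSum_mul (U := U) A 1
    rw [tt_one, mul_one] at this
    rw [this, grpSum, Finset.sum_product]
    simp
  have slice : ∀ Y : U → Finset G,
      grpSum (G × U) (Finset.univ.filter (fun p : G × U => p.2 ≠ 1 ∧ p.1 ∈ Y p.2)) =
      ∑ u ∈ Finset.univ.erase (1 : U), emb G U (grpSum G (Y u)) * tt G u := by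
    intro Y
    simp only [emb_grpSum_mul]
    rw [Finset.sum_sigma', grpSum]
    refine Finset.sum_nbij' (fun p => ⟨p.2, p.1⟩) (fun p => (p.2, p.1)) ?_ ?_ ?_ ?_ ?_ <;> simp
  have hE2 : NN - 1 = grpSum (G × U) (T 1) := by
    have : grpSum G ((Finset.univ.filter (· ∈ N)).erase 1) =
        grpSum G (Finset.univ.filter (· ∈ N)) - 1 := by
      rw [grpSum, Finset.sum_erase_eq_sub (by simp), map_one]; rfl
    have hT1 : T 1 = T₁ := by rw [hT]; rfl
    rw [hT1, hT₁, inl, this, map_sub, map_one]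
  have hE3 : GG - NN = grpSum (G × U) (T 2) := by
    have hT2 : T 2 = T₂ := by rw [hT]; rfl
    rw [hT2, hT₂, inl, hfil, map_sub]
  have hE4 : S = grpSum (G × U) (T 3) := by
    have hT3 : T 3 = T₃ := by rw [hT]; rfl
    rw [hT3, hT₃, slice]
  have hYS : ∑ u ∈ Finset.univ.erase (1 : U), emb G U (grpSum G (Finset.univ \ X u)) * tt G u
      = GG * t - S := by
    rw [ht, hS, Finset.mul_sum, ← Finset.sum_sub_distrib]
    refine Finset.sum_congr rfl fun u _ => ?_
    rw [grpSum_sdiff, map_sub, sub_mul]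
  have hE5 : GG * t - S = grpSum (G × U) (T 4) := by
    have hT4 : T 4 = T₄ := by rw [hT]; rfl
    rw [hT4, hT₄, ← hYS, ← slice]
    congr 1; ext p; simp
  have htc : ∀ z, t * emb G U z = emb G U z * t := by
    intro z
    rw [ht, Finset.sum_mul, Finset.mul_sum]
    exact Finset.sum_congr rfl fun u _ => emb_comm z u
  have hmulS : ∀ (z : MonoidAlgebra ℤ G) (c : ℤ),
      (∀ u, u ≠ 1 → z * grpSum G (X u) = c • grpSum G Finset.univ) →
      emb G U z * S = c • (GG * t) := by
    intro z c h
    rw [hS, ht, Finset.mul_sum, Finset.mul_sum, Finset.smul_sum]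
    refine Finset.sum_congr rfl fun u hu => ?_
    rw [← mul_assoc, ← map_mul, h u (Finset.ne_of_mem_erase hu), map_zsmul, smul_mul_assoc]
  have hSmul : ∀ (z : MonoidAlgebra ℤ G) (c : ℤ),
      (∀ u, u ≠ 1 → grpSum G (X u) * z = c • grpSum G Finset.univ) →
      S * emb G U z = c • (GG * t) := by
    intro z c h
    rw [hS, ht, Finset.sum_mul, Finset.mul_sum, Finset.smul_sum]
    refine Finset.sum_congr rfl fun u hu => ?_
    rw [mul_assoc, emb_comm, ← mul_assoc, ← map_mul, h u (Finset.ne_of_mem_erase hu), map_zsmul,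
      smul_mul_assoc]
  have htab := table (n : ℤ) ((n ^ 2 * l : ℕ) : ℤ) (w : ℤ) (μ : ℤ) (ν : ℤ) ((n * l : ℕ) : ℤ) (l : ℤ)
    NN GG S t
    (by rw [hNNdef, ← map_mul, N_mul_N, hN, map_zsmul])
    (by rw [hNNdef, hGGdef, ← map_mul, grpSum_mul_univ, hNc, map_zsmul])
    (by rw [hNNdef, hGGdef, ← map_mul, univ_mul_grpSum, hNc, map_zsmul])
    (by rw [hGGdef, ← map_mul, univ_mul_grpSum, Finset.card_univ, hG, map_zsmul])
    (hmulS _ _ fun u hu => by rw [univ_mul_grpSum, hXc u hu])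
    (hSmul _ _ fun u hu => by rw [grpSum_mul_univ, hXc u hu])
    (by
      rw [hmulS _ 1 fun u hu => ?_, one_smul]
      refine filter_mul_grpSum N (X u) 1 ?_
      rw [hXinv u hu]
      exact hXtrans _ (by simpa using hu))
    (by
      rw [hSmul _ 1 fun u hu => ?_, one_smul]
      exact mul_grpSum_filter N (X u) 1 (hXtrans u hu))
    (htc _) (htc _)
    (t_sq w hU _ tt_one tt_mul)
    (by
      rw [hS, S_sq w hU _ (fun u => (μ : ℤ) • (emb G U (grpSum G (X u)) * tt G u) +
        (ν : ℤ) • (emb G U (grpSum G (Finset.univ \ X u)) * tt G u))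
        (((n * l : ℕ) : ℤ) • (1 : MonoidAlgebra ℤ (G × U)) + (l : ℤ) • (GG - NN)),
        Finset.sum_add_distrib, ← Finset.smul_sum, ← Finset.smul_sum, hYS]
      · intro u hu
        rw [mul_assoc, ← mul_assoc (tt G u), emb_comm, mul_assoc, tt_mul, mul_inv_cancel, tt_one,
          mul_one, ← map_mul, hXX u hu, hfil, map_add, map_zsmul, map_zsmul, map_one, map_sub]
      · intro u v hu hv huv
        rw [mul_assoc, ← mul_assoc (tt G u), emb_comm, mul_assoc, tt_mul, ← mul_assoc, ← map_mul,
          hXY u v hu hv huv, map_add, map_zsmul, map_zsmul, add_mul, smul_mul_assoc,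
          smul_mul_assoc])
    (fun i => grpSum (G × U) (T i))
    (by
      rw [hE5, hE2, hE3, hE1, hE4]
      ext i : 1
      fin_cases i <;> rfl)
  exact ⟨hne, hdis, hcov, hinv, fun i j => nonneg_coeffs T hne hdis _ _ (htab i j).1,
    fun i j => (htab i j).2⟩
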